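/- Let Γ be a finite simplicial graph and let G be a limit group over 𝔾(Γ). Then the abelian subgroups of G are free abelian of uniformly bounded rank: there exists N ∈ ℕ such that every abelian subgroup A of G is isomorphic, as a group, to a free abelian group ℤ^k for some k ≤ N. -/

import Mathlib

/-- The set of commutation relators of a simplicial graph: one commutator
`[u,v]` for each pair of adjacent vertices. -/
def raagRels {V : Type*} (Γ : SimpleGraph V) : Set (FreeGroup V) :=
  {r | ∃ u v : V, Γ.Adj u v ∧
    r = FreeGroup.of u * FreeGroup.of v * (FreeGroup.of u)⁻¹ * (FreeGroup.of v)⁻¹}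

/-- The partially commutative group (right-angled Artin group) of a simplicial graph. -/
abbrev Raag {V : Type*} (Γ : SimpleGraph V) := PresentedGroup (raagRels Γ)

/-- `G` is residually `H`. -/
def Residually (H : Type*) [Group H] (G : Type*) [Group G] : Prop :=
  ∀ g : G, g ≠ 1 → ∃ φ : G →* H, φ g ≠ 1

/-- `G` is fully residually `H`. -/
def FullyResidually (H : Type*) [Group H] (G : Type*) [Group G] : Prop :=
  ∀ s : Finset G, (∀ g ∈ s, g ≠ 1) → ∃ φ : G →* H, ∀ g ∈ s, φ g ≠ 1

/-- A limit group over `H`: finitely generated and fully residually `H`. -/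
def IsLimitGroupOver (H : Type*) [Group H] (G : Type*) [Group G] : Prop :=
  Group.FG G ∧ FullyResidually H G

/-!
Let each generator of `𝔾(Γ)` scale its own two coordinates in `ℂ ^ (V × {±1})` by `t` and `t⁻¹`,
translate the coordinates of the vertices it does not commute with, and fix all others. When a
cyclically reduced word acts repeatedly on a constant vector, the letters that can be moved to its
front carry the large coordinates, so every letter gains a factor of order `t`. Hence each
nontrivial element has an eigenvalue whose modulus tends to infinity with `t`, uniformly in the
element.

For a limit group `G`, the maps to `𝔾(Γ)` and the parameters `t` assemble along an ultrafilter to a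
representation of `G` over a field of germs, in which each nontrivial element has an unbounded
eigenvalue. The eigenvalues on an abelian subgroup `A` are given by boundedly many characters, and
measuring their growth by the valuation of the bounded germs embeds `A` in a product of value
groups. All eigenvalues are algebraic over the field generated by the matrix entries of finitely
many generators of `G`, so by Abhyankar's inequality the rank of `A` is bounded independently
of `A`.

An abelian group of finite rank may fail to be free. But under a single map to `𝔾(Γ)`, chosen not to
kill a given element, the logarithms of the moduli of the eigenvalues of `A` form a discrete
subgroup of a Euclidean space, because only the identity of `𝔾(Γ)` has all its eigenvalues close to
the unit circle. So the homomorphisms `A → ℤ` separate points, and `A` embeds in the finitely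
generated dual of `Hom(A, ℤ)`.
-/

section SpectralCharacters

variable {F : Type*} [Field F]

theorem spectrum_map_eq_of_injective {R S : Type*} [Ring R] [Algebra F R]
    [Algebra.IsIntegral F R] [Ring S] [Algebra F S] (f : R →ₐ[F] S)
    (hf : Function.Injective f) (b : R) : spectrum F (f b) = spectrum F b := by
  refine (AlgHom.spectrum_apply_subset f b).antisymm fun x hx hu => hx ?_
  rw [spectrum.mem_resolventSet_iff,
    IsArtinianRing.isUnit_iff_nonZeroDivisor_of_isIntegral' (R := F)]
  rw [spectrum.mem_resolventSet_iff, ← AlgHom.commutes f, ← map_sub] at hu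
  exact mem_nonZeroDivisors_of_injective hf hu.mem_nonZeroDivisors

variable [IsAlgClosed F]

theorem spectrum_eq_range_algHom {R : Type*} [CommRing R] [Algebra F R]
    [Module.Finite F R] (b : R) :
    spectrum F b = Set.range fun ψ : R →ₐ[F] F => ψ b := by
  refine subset_antisymm (fun x hx => ?_) ?_
  · obtain ⟨I, _, hI⟩ := exists_max_ideal_of_mem_nonunits hx
    let e : F ≃ₐ[F] R ⧸ I := AlgEquiv.ofBijective (Algebra.ofId F (R ⧸ I))
      IsAlgClosed.algebraMap_bijective_of_isIntegral
    have hb : algebraMap F (R ⧸ I) x = Ideal.Quotient.mkₐ F I b :=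
      Ideal.Quotient.eq.2 hI
    refine ⟨(e.symm : R ⧸ I →ₐ[F] F).comp (Ideal.Quotient.mkₐ F I), ?_⟩
    simp only [AlgHom.comp_apply]
    rw [← hb]
    exact AlgHom.commutes _ _
  · rintro _ ⟨ψ, rfl⟩
    exact AlgHom.apply_mem_spectrum ψ b

open scoped IsMulCommutative in
theorem exists_characters_spectrum_eq_range {n A : Type*} [Fintype n] [DecidableEq n]
    [CommGroup A] (ρ : A →* Matrix n n F) :
    ∃ m ≤ Fintype.card n ^ 2, ∃ χ : Fin m → A →* Fˣ,
      ∀ a, spectrum F (ρ a) = Set.range fun j => (χ j a : F) := by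
  let S := Algebra.adjoin F (Set.range ρ)
  have _ : IsMulCommutative S := Algebra.isMulCommutative_adjoin F <| by
    rintro _ ⟨a, rfl⟩ _ ⟨b, rfl⟩
    rw [← map_mul, ← map_mul, mul_comm]
  have _ : Module.Finite F S := inferInstanceAs (Module.Finite F (Subalgebra.toSubmodule S))
  let ρS : A →* S := ρ.codRestrict S fun a => Algebra.subset_adjoin ⟨a, rfl⟩
  let e := Finite.equivFin (S →ₐ[F] F)
  refine ⟨Nat.card (S →ₐ[F] F), ?_,
    fun j => MonoidHom.toHomUnits ((e.symm j : S →* F).comp ρS), fun a => ?_⟩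
  · calc Nat.card (S →ₐ[F] F) ≤ Module.finrank F S := card_algHom_le_finrank F S F
      _ ≤ Module.finrank F (Matrix n n F) := Submodule.finrank_le (Subalgebra.toSubmodule S)
      _ = Fintype.card n ^ 2 := by simp [Module.finrank_matrix, sq]
  · rw [show ρ a = S.val (ρS a) from rfl,
      spectrum_map_eq_of_injective S.val Subtype.val_injective (ρS a)]
    rw [spectrum_eq_range_algHom, ← e.symm.surjective.range_comp]
    rfl

end SpectralCharacters

section Words

variable {V : Type*} (Γ : SimpleGraph V)

namespace Raag

/-- A letter of a word in the vertices and their formal inverses, in the encoding of `FreeGroup`: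
`(v, true)` stands for `v` and `(v, false)` for `v⁻¹`. -/
abbrev Letter (V : Type*) := V × Bool

/-- The formal inverse of a letter. -/
def Letter.inv (x : Letter V) : Letter V := (x.1, !x.2)

@[simp]
theorem Letter.inv_fst (x : Letter V) : x.inv.1 = x.1 := rfl

@[simp]
theorem Letter.inv_inv (x : Letter V) : x.inv.inv = x := by
  simp [Letter.inv]

theorem Letter.ne_inv (x : Letter V) : x ≠ x.inv := fun h => by
  simpa [Letter.inv] using congrArg Prod.snd h

theorem Letter.eq_or_eq_inv {x y : Letter V} (h : x.1 = y.1) : x = y ∨ x = y.inv := by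
  obtain ⟨u, a⟩ := x
  obtain ⟨v, b⟩ := y
  obtain rfl : u = v := h
  cases a <;> cases b <;> simp [Letter.inv]

theorem Letter.position_cases (Γ : SimpleGraph V) (x z : Letter V) :
    z = x ∨ z = x.inv ∨ Γ.Adj x.1 z.1 ∨ z.1 ≠ x.1 ∧ ¬ Γ.Adj x.1 z.1 := by
  by_cases h : z.1 = x.1
  · exact (Letter.eq_or_eq_inv h).imp_right .inl
  · tauto

/-- The element of the partially commutative group spelled by a word. -/
def ofWord (w : List (Letter V)) : Raag Γ :=
  PresentedGroup.mk (raagRels Γ) (FreeGroup.mk w)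

theorem ofWord_nil : ofWord Γ [] = 1 := rfl

theorem ofWord_append (p q : List (Letter V)) :
    ofWord Γ (p ++ q) = ofWord Γ p * ofWord Γ q := by
  rw [ofWord, ← FreeGroup.mul_mk, map_mul, ofWord, ofWord]

theorem ofWord_cons (x : Letter V) (w : List (Letter V)) :
    ofWord Γ (x :: w) = ofWord Γ [x] * ofWord Γ w :=
  ofWord_append Γ [x] w

theorem ofWord_inv (x : Letter V) : ofWord Γ [x.inv] = (ofWord Γ [x])⁻¹ := by
  rw [ofWord, ofWord, ← map_inv, FreeGroup.inv_mk]
  rfl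

theorem ofWord_surjective : Function.Surjective (ofWord Γ) :=
  (PresentedGroup.mk_surjective _).comp Quot.mk_surjective

theorem ofWord_flatten_replicate (m : ℕ) (w : List (Letter V)) :
    ofWord Γ (List.replicate m w).flatten = ofWord Γ w ^ m := by
  induction m with
  | zero => rfl
  | succ m ih => rw [List.replicate_succ, List.flatten_cons, ofWord_append, ih, pow_succ']

variable {Γ}

theorem commute_of_of_adj {u v : V} (h : Γ.Adj u v) :
    Commute (PresentedGroup.of u : Raag Γ) (PresentedGroup.of v) := by
  have hr : FreeGroup.of u * FreeGroup.of v * (FreeGroup.of u)⁻¹ * (FreeGroup.of v)⁻¹ ∈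
      raagRels Γ := ⟨u, v, h, rfl⟩
  simpa [mul_inv_eq_iff_eq_mul] using! PresentedGroup.one_of_mem hr

theorem commute_ofWord_of_adj {x y : Letter V} (h : Γ.Adj x.1 y.1) :
    Commute (ofWord Γ [x]) (ofWord Γ [y]) := by
  have eq_of_or_inv (z : Letter V) : ofWord Γ [z] = PresentedGroup.of z.1 ∨
      ofWord Γ [z] = (PresentedGroup.of z.1)⁻¹ := by
    obtain ⟨v, _ | _⟩ := z
    · exact .inr (ofWord_inv Γ (v, true))
    · exact .inl rfl
  rcases eq_of_or_inv x with hx | hx <;> rcases eq_of_or_inv y with hy | hy <;>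
    simpa only [hx, hy, Commute.inv_left_iff, Commute.inv_right_iff] using commute_of_of_adj h

theorem commute_ofWord_of_forall_adj {x : Letter V} {w : List (Letter V)}
    (h : ∀ y ∈ w, Γ.Adj y.1 x.1) : Commute (ofWord Γ w) (ofWord Γ [x]) := by
  induction w with
  | nil => exact Commute.one_left _
  | cons y w ih =>
    rw [List.forall_mem_cons] at h
    rw [ofWord_cons]
    exact (commute_ofWord_of_adj h.1).mul_left (ih h.2)

variable (Γ)

/-- The letter `x` is a head of the word `w`: commutations alone move an occurrence of `x` to
the front of `w`. -/
def IsHead (w : List (Letter V)) (x : Letter V) : Prop :=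
  ∃ p q, w = p ++ x :: q ∧ ∀ y ∈ p, Γ.Adj y.1 x.1

/-- The letter `x` is a tail of the word `w`: commutations alone move an occurrence of `x` to
the end of `w`. -/
def IsTail (w : List (Letter V)) (x : Letter V) : Prop :=
  ∃ p q, w = p ++ x :: q ∧ ∀ y ∈ q, Γ.Adj y.1 x.1

/-- A word is reduced if commutations alone never bring a letter next to its inverse. -/
def IsReduced : List (Letter V) → Prop
  | [] => True
  | y :: w => ¬ IsHead Γ w y.inv ∧ IsReduced w

/-- A word is cyclically reduced if it is reduced and no letter can be moved to its end while
the inverse letter can be moved to its front. -/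
def IsCyclicallyReduced (w : List (Letter V)) : Prop :=
  IsReduced Γ w ∧ ∀ x, IsTail Γ w x → ¬ IsHead Γ w x.inv

variable {Γ} {w p q : List (Letter V)} {x y : Letter V}

theorem not_isHead_nil : ¬ IsHead Γ [] x := by
  simp [IsHead]

theorem isHead_append :
    IsHead Γ (p ++ q) x ↔ IsHead Γ p x ∨ (∀ y ∈ p, Γ.Adj y.1 x.1) ∧ IsHead Γ q x := by
  constructor
  · rintro ⟨a, b, h, ha⟩
    rcases List.append_eq_append_iff.1 h with ⟨c, rfl, rfl⟩ | ⟨c, rfl, hc⟩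
    · exact .inr ⟨fun y hy => ha y (by simp [hy]), c, b, rfl, fun y hy => ha y (by simp [hy])⟩
    · rcases List.cons_eq_append_iff.1 hc with ⟨rfl, rfl⟩ | ⟨c, rfl, rfl⟩
      · exact .inr ⟨by simpa only [List.append_nil] using ha, [], b, rfl, by simp⟩
      · exact .inl ⟨a, c, rfl, ha⟩
  · rintro (⟨a, b, rfl, ha⟩ | ⟨hp, a, b, rfl, ha⟩)
    · exact ⟨a, b ++ q, by simp, ha⟩
    · exact ⟨p ++ a, b, by simp, fun y hy => (List.mem_append.1 hy).elim (hp y) (ha y)⟩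

theorem isHead_singleton : IsHead Γ [y] x ↔ y = x := by
  constructor
  · rintro ⟨p, q, h, -⟩
    simpa using (List.mem_singleton.1 (h ▸ by simp : x ∈ [y])).symm
  · rintro rfl
    exact ⟨[], [], rfl, by simp⟩

theorem isHead_cons : IsHead Γ (y :: w) x ↔ y = x ∨ Γ.Adj y.1 x.1 ∧ IsHead Γ w x := by
  rw [← List.singleton_append, isHead_append, isHead_singleton, List.forall_mem_singleton]

theorem IsHead.exists_ofWord_eq (h : IsHead Γ w x) :
    ∃ w', w'.length + 1 = w.length ∧ ofWord Γ w = ofWord Γ [x] * ofWord Γ w' := by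
  obtain ⟨p, q, rfl, hp⟩ := h
  refine ⟨p ++ q, by simp [add_assoc], ?_⟩
  rw [ofWord_append, ofWord_cons, ← mul_assoc, (commute_ofWord_of_forall_adj hp).eq, mul_assoc,
    ofWord_append]

theorem exists_shorter_of_not_isReduced (h : ¬ IsReduced Γ w) :
    ∃ w', w'.length < w.length ∧ ofWord Γ w' = ofWord Γ w := by
  induction w with
  | nil => exact absurd trivial h
  | cons y w ih =>
    by_cases hy : IsHead Γ w y.inv
    · obtain ⟨w', hlen, hw⟩ := hy.exists_ofWord_eq
      refine ⟨w', by simp; omega, ?_⟩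
      rw [ofWord_cons, hw, ofWord_inv, mul_inv_cancel_left]
    · obtain ⟨w', hlen, hw⟩ := ih fun hred => h ⟨hy, hred⟩
      exact ⟨y :: w', by simpa using hlen, by rw [ofWord_cons, hw, ← ofWord_cons]⟩

theorem exists_shorter_isConj_of_isTail_of_isHead (ht : IsTail Γ w x) (hh : IsHead Γ w x.inv) :
    ∃ w', w'.length < w.length ∧ IsConj (ofWord Γ w) (ofWord Γ w') := by
  obtain ⟨p, q, rfl, hq⟩ := ht
  have hp : IsHead Γ p x.inv := by
    simpa [isHead_append, isHead_cons, x.ne_inv] using hh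
  obtain ⟨p', hlen, hp'⟩ := hp.exists_ofWord_eq
  refine ⟨p' ++ q, by simp; omega, isConj_iff.2 ⟨ofWord Γ [x], ?_⟩⟩
  rw [ofWord_append, ofWord_append, hp', ofWord_cons Γ x q,
    ← (commute_ofWord_of_forall_adj hq).eq, ofWord_inv]
  group

theorem exists_isCyclicallyReduced_isConj (g : Raag Γ) :
    ∃ w, IsCyclicallyReduced Γ w ∧ IsConj g (ofWord Γ w) := by
  obtain ⟨w₀, rfl⟩ := ofWord_surjective Γ g
  obtain ⟨w, hw, hmin⟩ := (measure List.length).wf.has_min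
    {w | IsConj (ofWord Γ w₀) (ofWord Γ w)} ⟨w₀, IsConj.refl _⟩
  refine ⟨w, ⟨?_, fun x ht hh => ?_⟩, hw⟩
  · by_contra hred
    obtain ⟨w', hlen, hw'⟩ := exists_shorter_of_not_isReduced hred
    exact hmin w' (by simpa only [Set.mem_ofPred_eq, hw'] using hw) hlen
  · obtain ⟨w', hlen, hw'⟩ := exists_shorter_isConj_of_isTail_of_isHead ht hh
    exact hmin w' (hw.trans hw') hlen

theorem IsReduced.append (hp : IsReduced Γ p) (hq : IsReduced Γ q)
    (hpq : ∀ x, IsTail Γ p x → ¬ IsHead Γ q x.inv) : IsReduced Γ (p ++ q) := by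
  induction p with
  | nil => exact hq
  | cons y p ih =>
    refine ⟨fun hy => ?_, ih hp.2 ?_⟩
    · rcases isHead_append.1 hy with hy | ⟨hadj, hy⟩
      · exact hp.1 hy
      · exact hpq y ⟨[], p, rfl, hadj⟩ hy
    · rintro x ⟨a, b, rfl, hb⟩
      exact hpq x ⟨y :: a, b, rfl, hb⟩

theorem IsHead.of_flatten_replicate {m : ℕ} (h : IsHead Γ (List.replicate m w).flatten x) :
    IsHead Γ w x := by
  induction m with
  | zero => exact absurd h not_isHead_nil
  | succ m ih =>
    rcases isHead_append.1 h with h | ⟨-, h⟩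
    exacts [h, ih h]

theorem IsCyclicallyReduced.isReduced_flatten_replicate (h : IsCyclicallyReduced Γ w) (m : ℕ) :
    IsReduced Γ (List.replicate m w).flatten := by
  induction m with
  | zero => trivial
  | succ m ih => exact h.1.append ih fun x ht hh => h.2 x ht hh.of_flatten_replicate

end Raag

end Words

section HeadDomination

namespace Raag

variable {V F : Type*} [Field F] [LinearOrder F] (Γ : SimpleGraph V)

/-- The estimates showing that the coordinates at the heads of `w` are the large ones of `f`. They
persist when a reduced word acts on the constant function `1`. -/
structure IsDominatedByHeads (w : List (Letter V)) (f : Letter V → F) : Prop where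
  pos : ∀ x, 0 < f x
  inv_le : ∀ x, ¬ IsHead Γ w x.inv → f x.inv ≤ 2 * f x
  le_of_not_adj : ∀ x z : Letter V, IsHead Γ w x → z.1 ≠ x.1 → ¬ Γ.Adj x.1 z.1 → f x ≤ 2 * f z

variable [IsStrictOrderedRing F] {Γ} {t : F} {w : List (Letter V)} {f : Letter V → F}
  {y : Letter V}

theorem isDominatedByHeads_one : IsDominatedByHeads Γ [] (1 : Letter V → F) where
  pos _ := one_pos
  inv_le _ _ := by simp
  le_of_not_adj _ _ h := absurd h not_isHead_nil

namespace IsDominatedByHeads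

/-- The right-hand side is the amount by which `letterAction Γ t y` translates the coordinates that
`y` does not commute with. -/
theorem mul_le_increment (ht : 6 ≤ t) (h : IsDominatedByHeads Γ w f)
    (hy : ¬ IsHead Γ w y.inv) : (t - 3) * f y ≤ (t - 1) * f y + (t⁻¹ - 1) * f y.inv := by
  have := mul_nonneg (inv_nonneg.2 (show 0 ≤ t by linarith)) (h.pos y.inv).le
  linarith [h.inv_le y hy]

theorem increment_pos (ht : 6 ≤ t) (h : IsDominatedByHeads Γ w f)
    (hy : ¬ IsHead Γ w y.inv) : 0 < (t - 1) * f y + (t⁻¹ - 1) * f y.inv :=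
  (mul_pos (by linarith) (h.pos y)).trans_le (h.mul_le_increment ht hy)

end IsDominatedByHeads

/-- The product over all vertices of the larger of the two coordinates. Every letter of a reduced
word multiplies it by a factor of at least `t / 2`. -/
def potential [Fintype V] (f : Letter V → F) : F :=
  ∏ v, max (f (v, true)) (f (v, false))

end Raag

end HeadDomination

section LetterAction

variable {V : Type*} [DecidableEq V] (Γ : SimpleGraph V) [DecidableRel Γ.Adj]

namespace Raag

section Field

variable {F : Type*} [Field F]

/-- The action of a letter on functions of letters. The generator `v` scales the coordinates `v`
and `v⁻¹` by `t` and `t⁻¹`, fixes those of the vertices adjacent to `v`, and translates all others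
by the total increment of the coordinates `v` and `v⁻¹`. -/
def letterAction (t : F) (x : Letter V) : Module.End F (Letter V → F) where
  toFun f z :=
    if z = x then t * f x
    else if z = x.inv then t⁻¹ * f x.inv
    else if Γ.Adj x.1 z.1 then f z
    else f z + ((t - 1) * f x + (t⁻¹ - 1) * f x.inv)
  map_add' f g := by
    ext z
    simp only [Pi.add_apply]
    split_ifs <;> ring
  map_smul' a f := by
    ext z
    simp only [Pi.smul_apply, smul_eq_mul, RingHom.id_apply]
    split_ifs <;> ring

variable {Γ} {t : F} {x y z : Letter V} {f : Letter V → F}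

theorem letterAction_apply_self : letterAction Γ t x f x = t * f x := by
  simp [letterAction]

theorem letterAction_apply_inv : letterAction Γ t x f x.inv = t⁻¹ * f x.inv := by
  simp [letterAction, x.ne_inv.symm]

theorem letterAction_apply_of_adj (h : Γ.Adj x.1 z.1) : letterAction Γ t x f z = f z := by
  have hx : z ≠ x := by rintro rfl; exact h.ne rfl
  have hinv : z ≠ x.inv := by rintro rfl; exact h.ne rfl
  simp [letterAction, hx, hinv, h]

theorem letterAction_apply_of_not_adj (hne : z.1 ≠ x.1) (h : ¬ Γ.Adj x.1 z.1) :
    letterAction Γ t x f z = f z + ((t - 1) * f x + (t⁻¹ - 1) * f x.inv) := by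
  have hx : z ≠ x := by rintro rfl; exact hne rfl
  have hinv : z ≠ x.inv := by rintro rfl; exact hne rfl
  simp [letterAction, hx, hinv, h]

theorem letterAction_mul_letterAction_inv (ht : t ≠ 0) (x : Letter V) :
    letterAction Γ t x * letterAction Γ t x.inv = 1 := by
  refine LinearMap.ext fun f => funext fun z => ?_
  have hx : letterAction Γ t x.inv f x = t⁻¹ * f x := by
    simpa only [Letter.inv_inv] using letterAction_apply_inv (x := x.inv)
  rw [Module.End.mul_apply, Module.End.one_apply]
  rcases Letter.position_cases Γ x z with rfl | rfl | h | ⟨hne, h⟩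
  · rw [letterAction_apply_self, hx, mul_inv_cancel_left₀ ht]
  · rw [letterAction_apply_inv, letterAction_apply_self, inv_mul_cancel_left₀ ht]
  · rw [letterAction_apply_of_adj h, letterAction_apply_of_adj (x := x.inv) h]
  · rw [letterAction_apply_of_not_adj hne h, letterAction_apply_of_not_adj (x := x.inv) hne h, hx,
      letterAction_apply_self, Letter.inv_inv]
    field_simp
    ring

theorem commute_letterAction_of_adj (t : F) (h : Γ.Adj x.1 y.1) :
    Commute (letterAction Γ t x) (letterAction Γ t y) := by
  have apply_eq {x y : Letter V} (h : Γ.Adj x.1 y.1) (f : Letter V → F) :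
      letterAction Γ t x f y = f y ∧ letterAction Γ t x f y.inv = f y.inv :=
    ⟨letterAction_apply_of_adj h, letterAction_apply_of_adj h⟩
  refine LinearMap.ext fun f => funext fun z => ?_
  simp only [Module.End.mul_apply]
  rcases Letter.position_cases Γ x z with rfl | rfl | hx | ⟨hxne, hx⟩
  · simp only [letterAction_apply_self, apply_eq h.symm]
  · simp only [letterAction_apply_inv, apply_eq h.symm]
  · rw [letterAction_apply_of_adj hx]
    rcases Letter.position_cases Γ y z with rfl | rfl | hy | ⟨hyne, hy⟩
    · simp only [letterAction_apply_self, apply_eq h]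
    · simp only [letterAction_apply_inv, apply_eq h]
    · simp only [letterAction_apply_of_adj, hx, hy]
    · simp only [letterAction_apply_of_not_adj hyne hy, letterAction_apply_of_adj hx, apply_eq h]
  · rw [letterAction_apply_of_not_adj hxne hx]
    rcases Letter.position_cases Γ y z with rfl | rfl | hy | ⟨hyne, hy⟩
    · exact absurd h hx
    · exact absurd h hx
    · simp only [letterAction_apply_of_not_adj hxne hx, letterAction_apply_of_adj hy,
        apply_eq h.symm]
    · simp only [letterAction_apply_of_not_adj hxne hx, letterAction_apply_of_not_adj hyne hy,
        apply_eq h, apply_eq h.symm]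
      ring

theorem letterAction_map {K : Type*} [Field K] (φ : F →+* K) (t : F) (x : Letter V)
    (f : Letter V → F) : letterAction Γ (φ t) x (φ ∘ f) = φ ∘ letterAction Γ t x f := by
  ext z
  simp only [letterAction, LinearMap.coe_mk, AddHom.coe_mk, Function.comp_apply,
    apply_ite φ, map_mul, map_inv₀, map_add, map_sub, map_one]

theorem foldr_letterAction_map {K : Type*} [Field K] (φ : F →+* K) (t : F)
    (w : List (Letter V)) (f : Letter V → F) :
    w.foldr (fun x g => letterAction Γ (φ t) x g) (φ ∘ f) =
      φ ∘ w.foldr (fun x g => letterAction Γ t x g) f := by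
  induction w with
  | nil => rfl
  | cons x w ih => rw [List.foldr_cons, List.foldr_cons, ih, letterAction_map]

variable (Γ)

/-- `letterAction` as a unit of the endomorphism ring. -/
def letterUnit (ht : t ≠ 0) (x : Letter V) : (Module.End F (Letter V → F))ˣ where
  val := letterAction Γ t x
  inv := letterAction Γ t x.inv
  val_inv := letterAction_mul_letterAction_inv ht x
  inv_val := by simpa only [Letter.inv_inv] using letterAction_mul_letterAction_inv ht x.inv

theorem letterUnit_inv (ht : t ≠ 0) (x : Letter V) :
    letterUnit Γ ht x.inv = (letterUnit Γ ht x)⁻¹ :=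
  Units.ext rfl

theorem lift_letterUnit_eq_one (ht : t ≠ 0) {r : FreeGroup V} (hr : r ∈ raagRels Γ) :
    FreeGroup.lift (fun v => letterUnit Γ ht (v, true)) r = 1 := by
  obtain ⟨u, v, huv, rfl⟩ := hr
  have hcomm : Commute (letterUnit Γ ht (u, true)) (letterUnit Γ ht (v, true)) :=
    Units.ext (commute_letterAction_of_adj t huv)
  simp [hcomm.eq]

/-- The linear action of the partially commutative group in which letters act by
`letterAction`. -/
def action (ht : t ≠ 0) : Raag Γ →* (Module.End F (Letter V → F))ˣ :=
  PresentedGroup.toGroup fun _ => lift_letterUnit_eq_one Γ ht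

theorem action_ofWord_singleton (ht : t ≠ 0) (x : Letter V) :
    action Γ ht (ofWord Γ [x]) = letterUnit Γ ht x := by
  have of_true (v : V) : action Γ ht (ofWord Γ [(v, true)]) = letterUnit Γ ht (v, true) :=
    PresentedGroup.toGroup.of fun _ => lift_letterUnit_eq_one Γ ht
  obtain ⟨v, _ | _⟩ := x
  · have h := ofWord_inv Γ (v, true)
    rw [show (v, false) = Letter.inv (v, true) from rfl, h, map_inv, of_true, letterUnit_inv]
  · exact of_true v

theorem action_ofWord (ht : t ≠ 0) (w : List (Letter V)) (f : Letter V → F) :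
    (action Γ ht (ofWord Γ w)).val f = w.foldr (fun x g => letterAction Γ t x g) f := by
  induction w with
  | nil => rw [ofWord_nil, map_one]; rfl
  | cons x w ih =>
    rw [ofWord_cons, map_mul, action_ofWord_singleton, Units.val_mul, Module.End.mul_apply, ih]
    rfl

/-- The matrix form of `Raag.action`. -/
def rep [Fintype V] (ht : t ≠ 0) : Raag Γ →* Matrix (Letter V) (Letter V) F :=
  ((LinearMap.toMatrixAlgEquiv' : _ ≃ₐ[F] Matrix (Letter V) (Letter V) F) : _ →* _).comp <|
    (Units.coeHom _).comp (action Γ ht)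

theorem rep_ofWord_mulVec [Fintype V] (ht : t ≠ 0) (w : List (Letter V)) (f : Letter V → F) :
    (rep Γ ht (ofWord Γ w)).mulVec f = w.foldr (fun x g => letterAction Γ t x g) f := by
  rw [← action_ofWord Γ ht]
  exact LinearMap.toMatrix'_mulVec _ f

end Field

section Growth

variable {F : Type*} [Field F] [LinearOrder F] [IsStrictOrderedRing F] {Γ} {t : F}
  {w : List (Letter V)} {f : Letter V → F} {x y : Letter V}

namespace IsDominatedByHeads

theorem letterAction_pos (ht : 6 ≤ t) (h : IsDominatedByHeads Γ w f)
    (hy : ¬ IsHead Γ w y.inv) (x : Letter V) : 0 < letterAction Γ t y f x := by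
  have ht0 : 0 < t := by linarith
  rcases Letter.position_cases Γ y x with rfl | rfl | hx | ⟨hne, hx⟩
  · rw [letterAction_apply_self]
    exact mul_pos ht0 (h.pos x)
  · rw [letterAction_apply_inv]
    exact mul_pos (inv_pos.2 ht0) (h.pos y.inv)
  · rw [letterAction_apply_of_adj hx]
    exact h.pos x
  · rw [letterAction_apply_of_not_adj hne hx]
    exact add_pos (h.pos x) (h.increment_pos ht hy)

theorem letterAction_inv_le (ht : 6 ≤ t) (h : IsDominatedByHeads Γ w f)
    (hy : ¬ IsHead Γ w y.inv) (hx : ¬ IsHead Γ (y :: w) x.inv) :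
    letterAction Γ t y f x.inv ≤ 2 * letterAction Γ t y f x := by
  rw [isHead_cons, not_or, not_and] at hx
  rcases Letter.position_cases Γ y x with rfl | rfl | hadj | ⟨hne, hadj⟩
  · rw [letterAction_apply_inv, letterAction_apply_self]
    have hinv : t⁻¹ * f x.inv ≤ f x.inv :=
      mul_le_of_le_one_left (h.pos _).le (inv_le_one_of_one_le₀ (by linarith))
    have hself : f x ≤ t * f x := le_mul_of_one_le_left (h.pos x).le (by linarith)
    linarith [h.inv_le x hy]
  · exact absurd y.inv_inv.symm hx.1
  · rw [letterAction_apply_of_adj hadj, letterAction_apply_of_adj (z := x.inv) hadj]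
    exact h.inv_le x (hx.2 hadj)
  · rw [letterAction_apply_of_not_adj hne hadj, letterAction_apply_of_not_adj (z := x.inv) hne hadj]
    have hD := h.mul_le_increment ht hy
    have hy0 := h.pos y
    have hx0 := h.pos x
    by_cases hhead : IsHead Γ w x.inv
    · have hle : f x.inv ≤ 2 * f y :=
        h.le_of_not_adj x.inv y hhead hne.symm fun hyx => hadj hyx.symm
      nlinarith
    · nlinarith [h.inv_le x hhead]

theorem letterAction_le_of_not_adj (ht : 6 ≤ t) (h : IsDominatedByHeads Γ w f)
    (hy : ¬ IsHead Γ w y.inv) {z : Letter V} (hx : IsHead Γ (y :: w) x) (hne : z.1 ≠ x.1)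
    (hxz : ¬ Γ.Adj x.1 z.1) : letterAction Γ t y f x ≤ 2 * letterAction Γ t y f z := by
  have hD := h.mul_le_increment ht hy
  have hy0 := h.pos y
  rcases isHead_cons.1 hx with rfl | ⟨hyx, hx⟩
  · rw [letterAction_apply_self, letterAction_apply_of_not_adj hne hxz]
    nlinarith [h.pos z]
  · rw [letterAction_apply_of_adj hyx]
    refine (h.le_of_not_adj x z hx hne hxz).trans ?_
    rcases Letter.position_cases Γ y z with rfl | rfl | hyz | ⟨hne', hyz⟩
    · exact absurd hyx.symm hxz
    · exact absurd hyx.symm hxz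
    · rw [letterAction_apply_of_adj hyz]
    · rw [letterAction_apply_of_not_adj hne' hyz]
      linarith [h.increment_pos ht hy]

theorem cons (ht : 6 ≤ t) (h : IsDominatedByHeads Γ w f) (hy : ¬ IsHead Γ w y.inv) :
    IsDominatedByHeads Γ (y :: w) (letterAction Γ t y f) where
  pos := h.letterAction_pos ht hy
  inv_le _ := h.letterAction_inv_le ht hy
  le_of_not_adj _ _ := h.letterAction_le_of_not_adj ht hy

end IsDominatedByHeads

theorem IsDominatedByHeads.mul_potential_le [Fintype V] (ht : 6 ≤ t)
    (h : IsDominatedByHeads Γ w f) (hy : ¬ IsHead Γ w y.inv) :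
    t / 2 * potential f ≤ potential (letterAction Γ t y f) := by
  have max_pos (v : V) : 0 < max (f (v, true)) (f (v, false)) := lt_max_of_lt_left (h.pos _)
  have le_max (g : Letter V → F) (x : Letter V) : g x ≤ max (g (x.1, true)) (g (x.1, false)) := by
    obtain ⟨v, _ | _⟩ := x
    exacts [le_max_right _ _, le_max_left _ _]
  have at_y : t / 2 * max (f (y.1, true)) (f (y.1, false)) ≤
      max (letterAction Γ t y f (y.1, true)) (letterAction Γ t y f (y.1, false)) := by
    have hmax : max (f (y.1, true)) (f (y.1, false)) ≤ 2 * f y := by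
      have hself : f y ≤ 2 * f y := by linarith [h.pos y]
      have hinv := h.inv_le y hy
      obtain ⟨v, _ | _⟩ := y
      exacts [max_le hinv hself, max_le hself hinv]
    calc t / 2 * max (f (y.1, true)) (f (y.1, false)) ≤ t / 2 * (2 * f y) :=
          mul_le_mul_of_nonneg_left hmax (by linarith)
      _ = letterAction Γ t y f y := by rw [letterAction_apply_self]; ring
      _ ≤ _ := le_max _ y
  have off_y (v : V) (hv : v ≠ y.1) (b : Bool) : f (v, b) ≤ letterAction Γ t y f (v, b) := by
    by_cases hadj : Γ.Adj y.1 v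
    · rw [letterAction_apply_of_adj hadj]
    · rw [letterAction_apply_of_not_adj hv hadj]
      linarith [h.increment_pos ht hy]
  rw [potential, potential, ← Finset.mul_prod_erase _ _ (Finset.mem_univ y.1), ← mul_assoc,
    ← Finset.mul_prod_erase _ _ (Finset.mem_univ y.1)]
  refine mul_le_mul at_y (Finset.prod_le_prod (fun v _ => (max_pos v).le) fun v hv => ?_)
    (Finset.prod_nonneg fun v _ => (max_pos v).le) ?_
  · exact max_le_max (off_y v (Finset.ne_of_mem_erase hv) true)
      (off_y v (Finset.ne_of_mem_erase hv) false)
  · exact (h.letterAction_pos ht hy _).le.trans (le_max _ (y.1, true))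

theorem IsReduced.isDominatedByHeads_and_pow_le_potential [Fintype V] (ht : 6 ≤ t)
    (hw : IsReduced Γ w) :
    IsDominatedByHeads Γ w (w.foldr (fun x g => letterAction Γ t x g) 1) ∧
      (t / 2) ^ w.length ≤ potential (w.foldr (fun x g => letterAction Γ t x g) 1) := by
  induction w with
  | nil => exact ⟨isDominatedByHeads_one, by simp [potential]⟩
  | cons y w ih =>
    obtain ⟨hdom, hpot⟩ := ih hw.2
    refine ⟨hdom.cons ht hw.1, ?_⟩
    calc (t / 2) ^ (y :: w).length = t / 2 * (t / 2) ^ w.length := by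
          rw [List.length_cons, pow_succ']
      _ ≤ t / 2 * potential (w.foldr (fun x g => letterAction Γ t x g) 1) :=
          mul_le_mul_of_nonneg_left hpot (by linarith)
      _ ≤ _ := hdom.mul_potential_le ht hw.1

end Growth

end Raag

end LetterAction

section Expanding

theorem exists_mem_spectrum_le_norm_pow {A : Type*} [NormedRing A] [NormedAlgebra ℂ A]
    [CompleteSpace A] [Nontrivial A] {a : A} {c : ℝ} (hc : 0 ≤ c) {k : ℕ}
    (h : ∀ m, c ^ m ≤ ‖a ^ m‖ ^ k) : ∃ z ∈ spectrum ℂ a, c ≤ ‖z‖ ^ k := by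
  obtain ⟨z, hz, hza⟩ := spectrum.exists_nnnorm_eq_spectralRadius a
  refine ⟨z, hz, ?_⟩
  have hlim : Filter.Tendsto (fun m : ℕ => ‖a ^ m‖ ^ (1 / m : ℝ)) Filter.atTop (nhds ‖z‖) := by
    have := (ENNReal.tendsto_toReal (by simp)).comp
      (hza ▸ spectrum.pow_norm_pow_one_div_tendsto_nhds_spectralRadius a)
    refine this.congr fun m => ENNReal.toReal_ofReal (by positivity)
  refine ge_of_tendsto (hlim.pow k) (Filter.eventually_atTop.2 ⟨1, fun m hm => ?_⟩)
  have hm0 : m ≠ 0 := by omega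
  calc c = (c ^ m) ^ (1 / m : ℝ) := by rw [one_div, Real.pow_rpow_inv_natCast hc hm0]
    _ ≤ (‖a ^ m‖ ^ k) ^ (1 / m : ℝ) :=
      Real.rpow_le_rpow (by positivity) (h m) (by positivity)
    _ = (‖a ^ m‖ ^ (1 / m : ℝ)) ^ k := by
      rw [← Real.rpow_natCast_mul (norm_nonneg _), ← Real.rpow_mul_natCast (norm_nonneg _),
        mul_comm]

/-- A complex representation is expanding by the factor `c` if every nontrivial element has an
eigenvalue of modulus at least `c`. -/
def IsExpanding {H n : Type*} [Group H] [Fintype n] [DecidableEq n] (c : ℝ)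
    (ρ : H →* Matrix n n ℂ) : Prop :=
  ∀ h, h ≠ 1 → ∃ z ∈ spectrum ℂ (ρ h), c ≤ ‖z‖

theorem spectrum_map_eq_of_isConj {H R A : Type*} [Group H] [CommRing R] [Ring A] [Algebra R A]
    (ρ : H →* A) {g h : H} (hgh : IsConj g h) : spectrum R (ρ g) = spectrum R (ρ h) := by
  obtain ⟨u, rfl⟩ := isConj_iff.1 hgh
  simpa using (spectrum.units_conjugate (R := R) (a := ρ g) (u := Units.map ρ (toUnits u))).symm

namespace Raag

variable {V : Type*} [Fintype V] [DecidableEq V] {Γ : SimpleGraph V} [DecidableRel Γ.Adj]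

open scoped Matrix.Norms.Operator

theorem potential_le_norm_rep_pow {t : ℝ} (ht : 6 ≤ t) (ht0 : (t : ℂ) ≠ 0)
    {w : List (Letter V)} (hw : IsReduced Γ w) :
    potential (w.foldr (fun x g => letterAction Γ t x g) 1) ≤
      ‖rep Γ ht0 (ofWord Γ w)‖ ^ Fintype.card V := by
  obtain ⟨hdom, -⟩ := hw.isDominatedByHeads_and_pow_le_potential ht
  set f := w.foldr (fun x g => letterAction Γ t x g) 1
  have apply_le (x : Letter V) : f x ≤ ‖rep Γ ht0 (ofWord Γ w)‖ := by
    have hmulVec : (rep Γ ht0 (ofWord Γ w)).mulVec 1 = Complex.ofRealHom ∘ f := by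
      rw [← foldr_letterAction_map, rep_ofWord_mulVec]
      congr 1
    calc f x = ‖(rep Γ ht0 (ofWord Γ w)).mulVec 1 x‖ := by
          simp [hmulVec, abs_of_pos (hdom.pos x)]
      _ ≤ ‖(rep Γ ht0 (ofWord Γ w)).mulVec 1‖ := norm_le_pi_norm _ x
      _ ≤ ‖rep Γ ht0 (ofWord Γ w)‖ * ‖(1 : Letter V → ℂ)‖ := Matrix.linfty_opNorm_mulVec _ _
      _ ≤ ‖rep Γ ht0 (ofWord Γ w)‖ :=
        mul_le_of_le_one_right (norm_nonneg _) ((pi_norm_le_iff_of_nonneg zero_le_one).2 (by simp))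
  calc potential f ≤ ∏ _v : V, ‖rep Γ ht0 (ofWord Γ w)‖ :=
        Finset.prod_le_prod (fun v _ => (lt_max_of_lt_left (hdom.pos _)).le)
          fun v _ => max_le (apply_le _) (apply_le _)
    _ = _ := by rw [Finset.prod_const, Finset.card_univ]

theorem exists_mem_spectrum_rep_le {t : ℝ} (ht : 6 ≤ t) (ht0 : (t : ℂ) ≠ 0) {g : Raag Γ}
    (hg : g ≠ 1) : ∃ z ∈ spectrum ℂ (rep Γ ht0 g), t / 2 ≤ ‖z‖ ^ Fintype.card V := by
  obtain ⟨w, hw, hgw⟩ := exists_isCyclicallyReduced_isConj g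
  have hnil : w ≠ [] := by
    rintro rfl
    exact hg (isConj_one_left.1 (ofWord_nil Γ ▸ hgw))
  have : Nonempty (Letter V) := ⟨w.head hnil⟩
  rw [spectrum_map_eq_of_isConj _ hgw]
  refine exists_mem_spectrum_le_norm_pow (by linarith) fun m => ?_
  have hred := hw.isReduced_flatten_replicate m
  calc (t / 2) ^ m ≤ (t / 2) ^ (List.replicate m w).flatten.length := by
        refine pow_le_pow_right₀ (by linarith) ?_
        simpa using Nat.le_mul_of_pos_right m (List.length_pos_iff.2 hnil)
    _ ≤ _ := (hred.isDominatedByHeads_and_pow_le_potential ht).2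
    _ ≤ _ := potential_le_norm_rep_pow ht ht0 hred
    _ = _ := by rw [ofWord_flatten_replicate, map_pow]

theorem exists_isExpanding (Γ : SimpleGraph V) (c : ℝ) :
    ∃ ρ : Raag Γ →* Matrix (Letter V) (Letter V) ℂ, IsExpanding c ρ := by
  classical
  let t : ℝ := max 6 (2 * c ^ Fintype.card V)
  have ht : 6 ≤ t := le_max_left _ _
  have ht0 : (t : ℂ) ≠ 0 := Complex.ofReal_ne_zero.2 (by linarith)
  refine ⟨rep Γ ht0, fun g hg => ?_⟩
  obtain ⟨z, hz, hle⟩ := exists_mem_spectrum_rep_le ht ht0 hg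
  refine ⟨z, hz, le_of_not_gt fun hlt => hle.not_gt ?_⟩
  have hV : Fintype.card V ≠ 0 := fun h0 => by
    rw [h0, pow_zero] at hle
    linarith
  calc ‖z‖ ^ Fintype.card V < c ^ Fintype.card V := pow_lt_pow_left₀ hlt (norm_nonneg z) hV
    _ ≤ t / 2 := by linarith [le_max_right 6 (2 * c ^ Fintype.card V)]

end Raag

end Expanding

section DiscreteImage

theorem exists_dual_apply_ne_zero_of_le_norm {M E : Type*} [AddCommGroup M]
    [NormedAddCommGroup E] [NormedSpace ℝ E] [FiniteDimensional ℝ E] (L : M →ₗ[ℤ] E) {ε : ℝ}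
    (hε : 0 < ε) (hL : ∀ x, L x ≠ 0 → ε ≤ ‖L x‖) {x : M} (hx : L x ≠ 0) :
    ∃ f : Module.Dual ℤ M, f x ≠ 0 := by
  have hdisc : DiscreteTopology (LinearMap.range L) := by
    refine DiscreteTopology.of_forall_le_dist hε ?_
    rintro ⟨_, y, rfl⟩ ⟨_, z, rfl⟩ hyz
    have hne : L (y - z) ≠ 0 := by
      rw [map_sub, sub_ne_zero]
      exact fun h => hyz (Subtype.ext h)
    simpa only [Subtype.dist_eq, dist_eq_norm (L y), map_sub] using hL _ hne
  have hx' : L.rangeRestrict x ≠ 0 := fun h => hx (congrArg Subtype.val h)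
  obtain ⟨f, hf⟩ := not_forall.1 (mt (Module.forall_dual_apply_eq_zero_iff ℤ _).1 hx')
  exact ⟨f.comp L.rangeRestrict, hf⟩

variable {A H n : Type*} [CommGroup A] [Group H] [Fintype n] [DecidableEq n]

theorem IsExpanding.exists_dual_apply_ne_zero {c : ℝ} {ρ : H →* Matrix n n ℂ}
    (hρ : IsExpanding c ρ) (hc : 1 < c) (β : A →* H) {a : A} (ha : β a ≠ 1) :
    ∃ f : Module.Dual ℤ (Additive A), f (Additive.ofMul a) ≠ 0 := by
  obtain ⟨m, -, χ, hχ⟩ := exists_characters_spectrum_eq_range (ρ.comp β)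
  let L : Additive A →ₗ[ℤ] Fin m → ℝ := AddMonoidHom.toIntLinearMap
    { toFun := fun a j => Real.log ‖(χ j a.toMul : ℂ)‖
      map_zero' := by ext; simp
      map_add' := fun a b => by
        ext j
        simp [Real.log_mul] }
  have L_large (b : Additive A) (hb : β b.toMul ≠ 1) : Real.log c ≤ ‖L b‖ := by
    obtain ⟨z, hz, hcz⟩ := hρ _ hb
    obtain ⟨j, rfl⟩ := (hχ b.toMul).le hz
    calc Real.log c ≤ L b j := Real.log_le_log (by linarith) hcz
      _ ≤ ‖L b j‖ := le_abs_self _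
      _ ≤ ‖L b‖ := norm_le_pi_norm _ j
  have L_eq_zero (b : Additive A) (hb : β b.toMul = 1) : L b = 0 := by
    ext j
    have hmem : (χ j b.toMul : ℂ) ∈ spectrum ℂ (1 : Matrix n n ℂ) := by
      simpa [hb] using (hχ b.toMul).ge ⟨j, rfl⟩
    have hone : (χ j b.toMul : ℂ) = 1 := by
      rcases subsingleton_or_nontrivial (Matrix n n ℂ)
      · simp [spectrum.of_subsingleton] at hmem
      · simpa [spectrum.one_eq] using hmem
    change Real.log ‖(χ j b.toMul : ℂ)‖ = 0
    simp [hone]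
  have hlog : 0 < Real.log c := Real.log_pos hc
  refine exists_dual_apply_ne_zero_of_le_norm L hlog (fun b hb => L_large b (mt (L_eq_zero b) hb))
    (norm_pos_iff.1 (hlog.trans_le (L_large _ ha)))

end DiscreteImage

section Germs

open Filter

variable {I : Type*} {U : Ultrafilter I}

theorem isAlgClosed_germ {K : Type*} [Field K] [IsAlgClosed K] :
    IsAlgClosed (Germ (U : Filter I) K) := by
  let π := Germ.coeRingHom (R := K) (U : Filter I)
  have hπ : Function.Surjective π := Quotient.mk_surjective
  refine IsAlgClosed.of_exists_root _ fun p hp hirr => ?_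
  obtain ⟨q, rfl, hdeg, hq⟩ := Polynomial.lifts_and_natDegree_eq_and_monic
    (Polynomial.map_surjective π hπ p) hp
  have hroot (i : I) : ∃ x, (q.map (Pi.evalRingHom (fun _ => K) i)).eval x = 0 := by
    refine IsAlgClosed.exists_root _ fun h => hirr.natDegree_pos.ne' ?_
    rw [← hdeg, ← hq.natDegree_map (Pi.evalRingHom (fun _ => K) i)]
    exact Polynomial.natDegree_eq_zero_iff_degree_le_zero.2 h.le
  choose x hx using hroot
  have hqx : q.eval x = 0 := by
    ext i
    exact (Polynomial.eval_map_apply (Pi.evalRingHom (fun _ => K) i) x).symm.trans (hx i)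
  exact ⟨π x, by rw [Polynomial.eval_map_apply, hqx, map_zero]⟩

/-- The algebra structure on germs in which scalars are the germs of constant functions. -/
noncomputable instance germAlgebra {I R : Type*} [CommSemiring R] (l : Filter I) :
    Algebra R (Germ l R) where
  algebraMap := (Germ.coeRingHom l).comp (Pi.constRingHom I R)
  commutes' _ _ := mul_comm _ _
  smul_def' c := by
    rintro ⟨x⟩
    rfl

variable (U) in
/-- The germs along `U` of functions which are bounded on a set of `U`: a valuation ring of the
ultrapower, whose valuation measures the order of growth of a germ. -/
def boundedGerms (K : Type*) [NormedField K] : ValuationSubring (Germ (U : Filter I) K) where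
  carrier := {x | ∃ C : ℝ, x.LiftPred fun z => ‖z‖ ≤ C}
  mul_mem' := by
    rintro ⟨x⟩ ⟨y⟩ ⟨C, hC⟩ ⟨D, hD⟩
    refine ⟨C * D, ?_⟩
    filter_upwards [hC, hD] with i hi hj
    exact norm_mul_le_of_le hi hj
  one_mem' := ⟨1, Eventually.of_forall fun _ => norm_one.le⟩
  add_mem' := by
    rintro ⟨x⟩ ⟨y⟩ ⟨C, hC⟩ ⟨D, hD⟩
    refine ⟨C + D, ?_⟩
    filter_upwards [hC, hD] with i hi hj
    exact norm_add_le_of_le hi hj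
  zero_mem' := ⟨0, Eventually.of_forall fun _ => norm_zero.le⟩
  neg_mem' := by
    rintro ⟨x⟩ ⟨C, hC⟩
    exact ⟨C, hC.mono fun i hi => (norm_neg _).trans_le hi⟩
  mem_or_inv_mem' := by
    rintro ⟨x⟩
    refine (U.em fun i => ‖x i‖ ≤ 1).imp (fun h => ⟨1, h⟩) fun h => ⟨1, ?_⟩
    filter_upwards [h] with i hi
    change ‖(x i)⁻¹‖ ≤ 1
    rw [norm_inv]
    exact inv_le_one_of_one_le₀ (not_le.1 hi).le

theorem coe_mem_boundedGerms {K : Type*} [NormedField K] {x : I → K} :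
    (x : Germ (U : Filter I) K) ∈ boundedGerms U K ↔ ∃ C : ℝ, ∀ᶠ i in U, ‖x i‖ ≤ C :=
  Iff.rfl

instance isTrivialOn_valuation_boundedGerms {K : Type*} [NormedField K] :
    (boundedGerms U K).valuation.IsTrivialOn K where
  eq_one c hc := by
    have hle (d : K) : (boundedGerms U K).valuation (algebraMap K (Germ (U : Filter I) K) d) ≤ 1 :=
      (ValuationSubring.valuation_le_one_iff _ _).2 ⟨‖d‖, Eventually.of_forall fun _ => le_rfl⟩
    refine (hle c).antisymm ?_
    have hinv := hle c⁻¹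
    rwa [map_inv₀, map_inv₀, inv_le_one₀ ?_] at hinv
    simpa [zero_lt_iff] using hc

variable {G n K : Type*} [Monoid G] [Fintype n] [DecidableEq n] [Field K]

variable (U) in
/-- The representation over the field of germs along `U` whose matrix entries are the germs of
the matrix entries of a family of representations. -/
def germRep (ρ : I → G →* Matrix n n K) : G →* Matrix n n (Germ (U : Filter I) K) :=
  ((Germ.coeRingHom (U : Filter I)).mapMatrix.comp
    (Matrix.piRingEquiv (n := n) (β := fun _ : I => K)).symm.toRingHom : _ →* _).comp
      (MonoidHom.pi ρ)

theorem coe_mem_spectrum_germRep {ρ : I → G →* Matrix n n K} {g : G} {z : I → K}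
    (hz : ∀ᶠ i in U, z i ∈ spectrum K (ρ i g)) :
    (z : Germ (U : Filter I) K) ∈ spectrum (Germ (U : Filter I) K) (germRep U ρ g) := by
  let M : Matrix n n (I → K) := Matrix.piRingEquiv.symm fun i => ρ i g
  change Germ.coeRingHom _ z ∈ spectrum _ (M.map (Germ.coeRingHom _))
  rw [Matrix.mem_spectrum_iff_isRoot_charpoly, Matrix.charpoly_map, Polynomial.IsRoot,
    Polynomial.eval_map_apply]
  refine Germ.coe_eq.2 (hz.mono fun i hi => ?_)
  rw [Matrix.mem_spectrum_iff_isRoot_charpoly] at hi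
  have hM : (ρ i g).charpoly = M.charpoly.map (Pi.evalRingHom (fun _ => K) i) :=
    M.charpoly_map (Pi.evalRingHom (fun _ => K) i)
  rw [hM] at hi
  exact (Polynomial.eval_map_apply (Pi.evalRingHom (fun _ => K) i) z).symm.trans hi

end Germs

section RationalRank

theorem rank_quotient_inf_le {R M : Type*} [CommRing R] [IsDomain R] [AddCommGroup M] [Module R M]
    (P Q : Submodule R M) :
    Module.rank R (M ⧸ P ⊓ Q) ≤ Module.rank R (M ⧸ P) + Module.rank R (M ⧸ Q) := by
  let π := Submodule.factor (inf_le_left : P ⊓ Q ≤ P)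
  let ψ := (Submodule.factor (inf_le_right : P ⊓ Q ≤ Q)).domRestrict (LinearMap.ker π)
  have hψ : Function.Injective ψ := by
    rw [← LinearMap.ker_eq_bot, LinearMap.ker_eq_bot']
    rintro ⟨x, hx⟩ hxQ
    obtain ⟨x, rfl⟩ := Submodule.Quotient.mk_surjective _ x
    have hP : x ∈ P := (Submodule.Quotient.mk_eq_zero P).1 hx
    have hQ : x ∈ Q := (Submodule.Quotient.mk_eq_zero Q).1 hxQ
    exact Subtype.ext ((Submodule.Quotient.mk_eq_zero _).2 ⟨hP, hQ⟩)
  calc Module.rank R (M ⧸ P ⊓ Q)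
      = Module.rank R (LinearMap.range π) + Module.rank R (LinearMap.ker π) :=
        (LinearMap.rank_range_add_rank_ker π).symm
    _ ≤ Module.rank R (M ⧸ P) + Module.rank R (M ⧸ Q) :=
        add_le_add (Submodule.rank_le _) (LinearMap.rank_le_of_injective ψ hψ)

theorem rank_le_card_mul_of_iInf_eq_bot {R M J : Type*} [CommRing R] [IsDomain R]
    [AddCommGroup M] [Module R M] [Fintype J] {P : J → Submodule R M} (hP : ⨅ j, P j = ⊥) {N : ℕ}
    (hN : ∀ j, Module.rank R (M ⧸ P j) ≤ N) :
    Module.rank R M ≤ (Fintype.card J * N : ℕ) := by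
  have hinf (s : Finset J) : Module.rank R (M ⧸ s.inf P) ≤ (s.card * N : ℕ) := by
    classical
    induction s using Finset.induction_on with
    | empty => simp [rank_subsingleton']
    | insert j s hj ih =>
      rw [Finset.inf_insert, Finset.card_insert_of_notMem hj, add_one_mul, add_comm, Nat.cast_add]
      exact (rank_quotient_inf_le _ _).trans (add_le_add (hN j) ih)
  calc Module.rank R M = Module.rank R (M ⧸ (⊥ : Submodule R M)) :=
        (Submodule.quotEquivOfEqBot ⊥ rfl).symm.rank_eq
    _ ≤ _ := by rw [← hP, ← Finset.inf_univ_eq_iInf]; exact hinf Finset.univ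

theorem encard_le_of_algebraicIndepOn_of_isAlgebraic {k F : Type*} [Field k] [Field F] [Algebra k F]
    {s t : Set F} (hs : AlgebraicIndepOn k id s)
    (ht : ∀ x ∈ s, IsAlgebraic (Algebra.adjoin k t) x) : s.encard ≤ t.encard := by
  have hst : s ⊆ (AlgebraicIndependent.matroid k F).closure t := by
    rw [AlgebraicIndependent.matroid_closure_eq]
    exact ht
  calc s.encard = (AlgebraicIndependent.matroid k F).eRk s :=
        (AlgebraicIndependent.matroid_indep_iff.2 hs).eRk_eq_encard.symm
    _ ≤ (AlgebraicIndependent.matroid k F).eRk ((AlgebraicIndependent.matroid k F).closure t) :=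
        Matroid.eRk_mono _ hst
    _ = (AlgebraicIndependent.matroid k F).eRk t := Matroid.eRk_closure_eq _ t
    _ ≤ t.encard := Matroid.eRk_le_encard _ t

variable {k F Γ₀ : Type*} [Field k] [Field F] [Algebra k F] [LinearOrderedCommGroupWithZero Γ₀]
  (v : Valuation F Γ₀) [v.IsTrivialOn k]

theorem linearIndependent_of_valuation_injective {ι : Type*} {x : ι → F} (hx : ∀ i, x i ≠ 0)
    (hv : Function.Injective (v ∘ x)) : LinearIndependent k x := by
  classical
  rw [linearIndependent_iff']
  by_contra! ⟨s, g, hs, i, hi, hgi⟩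
  have hval (i : ι) (hi : g i ≠ 0) : v (g i • x i) = v (x i) := by
    rw [Algebra.smul_def, map_mul, Valuation.IsTrivialOn.eq_one _ hi, one_mul]
  obtain ⟨j, hj, hmax⟩ := (s.filter (g · ≠ 0)).exists_max_image (v ∘ x) ⟨i, by simp [hi, hgi]⟩
  rw [Finset.mem_filter] at hj
  have hdom : ∀ i ∈ s \ {j}, v (g i • x i) < v (g j • x j) := by
    intro i hi
    rw [Finset.mem_sdiff, Finset.mem_singleton] at hi
    rw [hval j hj.2]
    by_cases hgi : g i = 0
    · simpa [hgi, zero_lt_iff] using hx j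
    · rw [hval i hgi]
      exact (hmax i (Finset.mem_filter.2 ⟨hi.1, hgi⟩)).lt_of_ne fun h => hi.2 (hv h)
  have hsum := v.map_sum_eq_of_lt hj.1 hdom
  rw [hs, map_zero, hval j hj.2] at hsum
  exact hx j ((Valuation.zero_iff v).1 hsum.symm)

theorem algebraicIndependent_of_linearIndependent_valuation {ι : Type*} {x : ι → Fˣ}
    (hx : LinearIndependent ℤ fun i => Additive.ofMul (Units.map (v : F →* Γ₀) (x i))) :
    AlgebraicIndependent k fun i => (x i : F) := by
  let w (i : ι) : Additive Γ₀ˣ := Additive.ofMul (Units.map (v : F →* Γ₀) (x i))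
  have hw : LinearIndependent ℕ w := hx.restrict_scalars (by simpa using Nat.cast_injective)
  have hval (d : ι →₀ ℕ) :
      v (d.prod fun i e => (x i : F) ^ e) = (Finsupp.linearCombination ℕ w d).toMul := by
    simp [Finsupp.linearCombination_apply, Finsupp.sum, Finsupp.prod, w, toMul_sum]
  have hmon : LinearIndependent k fun d : ι →₀ ℕ => d.prod fun i e => (x i : F) ^ e := by
    refine linearIndependent_of_valuation_injective v (fun d => ?_) fun d d' h => hw ?_
    · simp [Finsupp.prod, Finset.prod_ne_zero_iff]
    · simp only [Function.comp_apply, hval] at h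
      exact Additive.toMul.injective (Units.ext h)
  refine algebraicIndependent_iff.2 fun p hp => MvPolynomial.ext _ _ fun d => ?_
  by_cases hd : d ∈ p.support
  · refine linearIndependent_iff'.1 hmon p.support (p.coeff ·) ?_ d hd
    rw [← hp, MvPolynomial.aeval_def, MvPolynomial.eval₂_eq]
    simp only [Algebra.smul_def, Finsupp.prod]
  · exact MvPolynomial.notMem_support_iff.1 hd

theorem rank_le_card_of_valuation_isAlgebraic (E : Finset F)
    (Δ : Submodule ℤ (Additive Γ₀ˣ))
    (hΔ : ∀ γ ∈ Δ, ∃ x : Fˣ, IsAlgebraic (Algebra.adjoin k (E : Set F)) (x : F) ∧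
      Units.map (v : F →* Γ₀) x = γ.toMul) :
    Module.rank ℤ Δ ≤ E.card := by
  refine rank_le fun s hs => ?_
  choose x hx hxv using fun γ : s => hΔ γ.1 γ.1.2
  have halg : AlgebraicIndependent k fun γ : s => (x γ : F) := by
    refine algebraicIndependent_of_linearIndependent_valuation v ?_
    simp only [hxv, ofMul_toMul]
    exact hs.map' Δ.subtype Δ.ker_subtype
  have hrange : ∀ y ∈ Set.range fun γ : s => (x γ : F),
      IsAlgebraic (Algebra.adjoin k (E : Set F)) y := by
    rintro _ ⟨γ, rfl⟩
    exact hx γ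
  have hcard := encard_le_of_algebraicIndepOn_of_isAlgebraic halg.coe_range hrange
  rw [← Set.image_univ, halg.injective.injOn.encard_image, Set.encard_univ] at hcard
  simpa using hcard

end RationalRank

section Freeness

variable {R M : Type*} [CommRing R] [IsDomain R] [AddCommGroup M] [Module R M]

theorem exists_finite_isTorsion_quotient_span (hM : Module.rank R M < Cardinal.aleph0) :
    ∃ s : Set M, s.Finite ∧ Module.IsTorsion R (M ⧸ Submodule.span R s) := by
  obtain ⟨s, hs, hli⟩ := exists_set_linearIndependent_of_isDomain R M
  refine ⟨s, Cardinal.lt_aleph0_iff_set_finite.1 (hs ▸ hM), ?_⟩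
  have hadd := rank_quotient_add_rank_of_isDomain (Submodule.span R s)
  rw [rank_span_set hli, hs] at hadd
  exact Module.rank_eq_zero_iff_isTorsion.1
    (Cardinal.eq_of_add_eq_add_right (by simpa using hadd) hM)

theorem finite_dual_of_rank_lt_aleph0 [IsNoetherianRing R]
    (hM : Module.rank R M < Cardinal.aleph0) : Module.Finite R (Module.Dual R M) := by
  obtain ⟨s, hs, htors⟩ := exists_finite_isTorsion_quotient_span hM
  have _ : Finite s := hs
  let restrict : Module.Dual R M →ₗ[R] s → R :=
    LinearMap.pi fun x => Module.Dual.eval R M x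
  refine Module.Finite.of_injective restrict ((injective_iff_map_eq_zero restrict).2 fun f hf => ?_)
  have hspan : Submodule.span R s ≤ LinearMap.ker f :=
    Submodule.span_le.2 fun x hx => congrFun hf ⟨x, hx⟩
  ext x
  obtain ⟨c, hc⟩ := @htors (Submodule.Quotient.mk x)
  have hcx : f ((c : R) • x) = 0 := hspan ((Submodule.Quotient.mk_eq_zero _).1 hc)
  rw [map_smul, smul_eq_mul] at hcx
  exact (mul_eq_zero.1 hcx).resolve_left (nonZeroDivisors.coe_ne_zero c)

theorem finite_and_free_of_rank_lt_aleph0_of_dual_separating [IsPrincipalIdealRing R]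
    (hM : Module.rank R M < Cardinal.aleph0)
    (hdual : ∀ x : M, x ≠ 0 → ∃ f : Module.Dual R M, f x ≠ 0) :
    Module.Finite R M ∧ Module.Free R M := by
  have _ := finite_dual_of_rank_lt_aleph0 hM
  have heval : Function.Injective (Module.Dual.eval R M) := by
    refine (injective_iff_map_eq_zero _).2 fun x hx => ?_
    by_contra hx0
    obtain ⟨f, hf⟩ := hdual x hx0
    exact hf (LinearMap.congr_fun hx f)
  have _ : Module.Finite R M := Module.Finite.of_injective _ heval
  have _ : Module.IsTorsionFree R M := heval.moduleIsTorsionFree _ (map_smul _)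
  exact ⟨inferInstance, inferInstance⟩

end Freeness

section GrowthRank

variable {k F n : Type*} [Field k] [Field F] [Algebra k F] [Fintype n] [DecidableEq n]

theorem isAlgebraic_of_mem_spectrum {S : Subalgebra k F} {M : Matrix n n F}
    (hM : ∀ i j, M i j ∈ S) {z : F} (hz : z ∈ spectrum F M) : IsAlgebraic S z := by
  let M' : Matrix n n S := fun i j => ⟨M i j, hM i j⟩
  have hcharpoly : M.charpoly = M'.charpoly.map (algebraMap S F) :=
    M'.charpoly_map (algebraMap S F)
  rw [Matrix.mem_spectrum_iff_isRoot_charpoly, hcharpoly, Polynomial.IsRoot,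
    Polynomial.eval_map] at hz
  exact IsIntegral.isAlgebraic ⟨M'.charpoly, M'.charpoly_monic, hz⟩

variable (k) in
theorem exists_finset_forall_mem_adjoin {G : Type*} [Monoid G] [Monoid.FG G]
    (ρ : G →* Matrix n n F) :
    ∃ E : Finset F, ∀ g i j, ρ g i j ∈ Algebra.adjoin k (E : Set F) := by
  classical
  obtain ⟨S, hS⟩ := (Monoid.FG.fg_top : (⊤ : Submonoid G).FG)
  let E : Finset F := (S ×ˢ Finset.univ).image fun p : G × n × n => ρ p.1 p.2.1 p.2.2
  have hgen : (S : Set G) ⊆ (Algebra.adjoin k (E : Set F)).matrix.toSubmonoid.comap ρ :=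
    fun s hs i j => Algebra.subset_adjoin <|
      Finset.mem_image_of_mem (a := (s, i, j)) _ (by simpa using hs)
  exact ⟨E, fun g => Submonoid.closure_le.2 hgen (hS ▸ Submonoid.mem_top g)⟩

theorem rank_le_of_forall_exists_mem_spectrum_valuation_ne_one {Γ₀ A : Type*}
    [LinearOrderedCommGroupWithZero Γ₀] (v : Valuation F Γ₀) [v.IsTrivialOn k] [IsAlgClosed F]
    [CommGroup A] {ρ : A →* Matrix n n F} {E : Finset F}
    (hE : ∀ a i j, ρ a i j ∈ Algebra.adjoin k (E : Set F))
    (hρ : ∀ a, a ≠ 1 → ∃ z ∈ spectrum F (ρ a), v z ≠ 1) :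
    Module.rank ℤ (Additive A) ≤ (Fintype.card n ^ 2 * E.card : ℕ) := by
  obtain ⟨m, hm, χ, hχ⟩ := exists_characters_spectrum_eq_range ρ
  let L (j : Fin m) : Additive A →ₗ[ℤ] Additive Γ₀ˣ :=
    ((Units.map (v : F →* Γ₀)).comp (χ j)).toAdditive.toIntLinearMap
  have L_inj : ⨅ j, LinearMap.ker (L j) = ⊥ := by
    refine eq_bot_iff.2 fun a ha => ?_
    by_contra ha0
    obtain ⟨z, hz, hvz⟩ := hρ a.toMul ha0
    obtain ⟨j, rfl⟩ := (hχ a.toMul).le hz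
    exact hvz (congrArg Units.val ((Submodule.mem_iInf _).1 ha j))
  have L_rank (j : Fin m) : Module.rank ℤ (Additive A ⧸ LinearMap.ker (L j)) ≤ E.card := by
    have hrange : Module.rank ℤ (LinearMap.range (L j)) ≤ E.card := by
      refine rank_le_card_of_valuation_isAlgebraic (k := k) v E _ ?_
      rintro _ ⟨a, rfl⟩
      exact ⟨χ j a.toMul, isAlgebraic_of_mem_spectrum (hE a.toMul) ((hχ a.toMul).ge ⟨j, rfl⟩), rfl⟩
    have hlift := (L j).quotKerEquivRange.lift_rank_eq
    rwa [← Cardinal.lift_le_nat_iff, ← hlift, Cardinal.lift_le_nat_iff] at hrange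
  refine (rank_le_card_mul_of_iInf_eq_bot L_inj L_rank).trans (Nat.cast_le.2 ?_)
  rw [Fintype.card_fin]
  gcongr

end GrowthRank

section LimitGroups

open Filter

variable {H G n : Type*} [Group H] [Group G] [Fintype n] [DecidableEq n]

theorem FullyResidually.residually (hG : FullyResidually H G) : Residually H G := fun g hg =>
  (hG {g} (by simpa using hg)).imp fun _ hφ => hφ g (Finset.mem_singleton_self g)

theorem FullyResidually.exists_rep_germ_spectrum_unbounded (hG : FullyResidually H G)
    (hH : ∀ c : ℝ, ∃ ρ : H →* Matrix n n ℂ, IsExpanding c ρ) :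
    ∃ (U : Ultrafilter (Finset G × ℕ)) (ρ : G →* Matrix n n (Germ (U : Filter (Finset G × ℕ)) ℂ)),
      ∀ g, g ≠ 1 → ∃ z ∈ spectrum _ (ρ g), z ∉ boundedGerms U ℂ := by
  classical
  have hφ (s : Finset G) : ∃ φ : G →* H, ∀ g ∈ s, g ≠ 1 → φ g ≠ 1 := by
    obtain ⟨φ, hφ⟩ := hG (s.erase 1) fun g hg => Finset.ne_of_mem_erase hg
    exact ⟨φ, fun g hg hg1 => hφ g (Finset.mem_erase.2 ⟨hg1, hg⟩)⟩
  choose φ hφ using hφ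
  choose σ hσ using fun k : ℕ => hH k
  let ρ (i : Finset G × ℕ) : G →* Matrix n n ℂ := (σ i.2).comp (φ i.1)
  let U : Ultrafilter (Finset G × ℕ) := Ultrafilter.of atTop
  refine ⟨U, germRep U ρ, fun g hg => ?_⟩
  have hz (i : Finset G × ℕ) : ∃ z : ℂ, g ∈ i.1 → z ∈ spectrum ℂ (ρ i g) ∧ i.2 ≤ ‖z‖ := by
    by_cases hgi : g ∈ i.1
    · obtain ⟨z, hz⟩ := hσ i.2 _ (hφ i.1 g hgi hg)
      exact ⟨z, fun _ => hz⟩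
    · exact ⟨0, fun h => absurd h hgi⟩
  choose z hz using hz
  have hU {p : Finset G × ℕ → Prop} (hp : ∀ᶠ i in atTop, p i) : ∀ᶠ i in U, p i :=
    Ultrafilter.of_le atTop hp
  have hmem : ∀ᶠ i : Finset G × ℕ in U, g ∈ i.1 :=
    hU ((eventually_ge_atTop ({g}, 0)).mono fun i hi => hi.1 (Finset.mem_singleton_self g))
  refine ⟨z, coe_mem_spectrum_germRep (hmem.mono fun i hi => (hz i hi).1), ?_⟩
  rw [coe_mem_boundedGerms]
  rintro ⟨C, hC⟩
  obtain ⟨k, hk⟩ := exists_nat_gt C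
  have hlarge : ∀ᶠ i : Finset G × ℕ in U, k ≤ i.2 :=
    hU ((eventually_ge_atTop (∅, k)).mono fun i hi => hi.2)
  obtain ⟨i, hgi, hCi, hki⟩ := (hmem.and (hC.and hlarge)).exists
  have : (k : ℝ) ≤ i.2 := mod_cast hki
  linarith [(hz i hgi).2]

theorem IsLimitGroupOver.exists_rank_le (hG : IsLimitGroupOver H G)
    (hH : ∀ c : ℝ, ∃ ρ : H →* Matrix n n ℂ, IsExpanding c ρ) :
    ∃ N : ℕ, ∀ (A : Type*) [CommGroup A] (β : A →* G), Function.Injective β →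
      Module.rank ℤ (Additive A) ≤ N := by
  have _ : Monoid.FG G := Group.fg_iff_monoid_fg.1 hG.1
  obtain ⟨U, ρ, hρ⟩ := hG.2.exists_rep_germ_spectrum_unbounded hH
  have _ : IsAlgClosed (Germ (U : Filter (Finset G × ℕ)) ℂ) := isAlgClosed_germ
  obtain ⟨E, hE⟩ := exists_finset_forall_mem_adjoin ℂ ρ
  refine ⟨Fintype.card n ^ 2 * E.card, fun A _ β hβ => ?_⟩
  refine rank_le_of_forall_exists_mem_spectrum_valuation_ne_one (k := ℂ) (ρ := ρ.comp β)
    (boundedGerms U ℂ).valuation (fun a => hE (β a)) fun a ha => ?_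
  obtain ⟨z, hz, hzU⟩ := hρ (β a) ((map_ne_one_iff β hβ).2 ha)
  exact ⟨z, hz, fun h => hzU ((ValuationSubring.valuation_le_one_iff _ z).1 h.le)⟩

theorem Residually.exists_dual_apply_ne_zero (hG : Residually H G) {c : ℝ} (hc : 1 < c)
    {ρ : H →* Matrix n n ℂ} (hρ : IsExpanding c ρ) {A : Type*} [CommGroup A] {β : A →* G}
    (hβ : Function.Injective β) {x : Additive A} (hx : x ≠ 0) :
    ∃ f : Module.Dual ℤ (Additive A), f x ≠ 0 := by
  obtain ⟨φ, hφ⟩ := hG (β x.toMul) ((map_ne_one_iff β hβ).2 hx)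
  exact hρ.exists_dual_apply_ne_zero hc (φ.comp β) hφ

end LimitGroups

theorem abelian_subgroups_of_limit_group_free_of_bounded_rank_general
    {H G n : Type*} [Group H] [Group G] [Fintype n] [DecidableEq n]
    (hH : ∀ c : ℝ, ∃ ρ : H →* Matrix n n ℂ, IsExpanding c ρ) (hG : IsLimitGroupOver H G) :
    ∃ N : ℕ, ∀ A : Subgroup G, (∀ a b : A, a * b = b * a) →
      ∃ k : ℕ, k ≤ N ∧ Nonempty (A ≃* Multiplicative (Fin k → ℤ)) := by
  obtain ⟨N, hN⟩ := hG.exists_rank_le hH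
  obtain ⟨ρ, hρ⟩ := hH 2
  refine ⟨N, fun A hA => ?_⟩
  let _ : CommGroup A := { mul_comm := hA }
  have hrank := hN A A.subtype A.subtype_injective
  obtain ⟨_, _⟩ := finite_and_free_of_rank_lt_aleph0_of_dual_separating
    (hrank.trans_lt (Cardinal.natCast_lt_aleph0)) fun x hx =>
      hG.2.residually.exists_dual_apply_ne_zero one_lt_two hρ A.subtype_injective hx
  exact ⟨Module.finrank ℤ (Additive A), Module.finrank_le_of_rank_le hrank,
    ⟨AddEquiv.toMultiplicativeRight
      (Module.finBasis ℤ (Additive A)).equivFun.toAddEquiv⟩⟩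

theorem abelian_subgroups_of_limit_group_free_of_bounded_rank
    {V : Type} [Fintype V] (Γ : SimpleGraph V)
    (G : Type) [Group G] (hG : IsLimitGroupOver (Raag Γ) G) :
    ∃ N : ℕ, ∀ A : Subgroup G, (∀ a b : A, a * b = b * a) →
      ∃ k : ℕ, k ≤ N ∧ Nonempty (A ≃* Multiplicative (Fin k → ℤ)) := by
  classical
  exact abelian_subgroups_of_limit_group_free_of_bounded_rank_general
    (Raag.exists_isExpanding Γ) hG
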